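/- Let D > 0, let F : [0, D) → ℝ be C³ with F(0) = 0, F'(0) = 0, and F'(t), F''(t), F'''(t), and (F(t)/t)' all nonnegative on (0, D), and let r : ℂ² → ℝ be convex and Fréchet-differentiable. Define ρ(z) = F(|z₁|²) + r(z) for |z₁|² < D, and fix d with d² < D. Then for each k ∈ {1, 2} there is a constant c > 0 such that: for all ζ, z ∈ ℂ² with |ζ₁| ≤ d, |z₁| ≤ d, ρ(ζ) − ρ(z) ≥ 0, and |ζ₁| ≤ |z₁ − ζ₁|, one has |Φ(ζ,z)|^k · |z − ζ| ≥ c·( [ |Im Φ(ζ,z)| + ρ(ζ) − ρ(z) + F(|ζ₁|²/2) ]^k · |ζ₁| + [ |Im Φ(ζ,z)| + ρ(ζ) − ρ(z) + F(|z₁|²/2) ]^k · |z₁| ). -/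

import Mathlib

open Complex Set

/-- The Wirtinger derivative `∂g/∂z₁` of a real-valued function `g` on `ℂ²`. -/
noncomputable def wirt1 (g : ℂ × ℂ → ℝ) (ζ : ℂ × ℂ) : ℂ :=
  (1 / 2 : ℂ) * (((fderiv ℝ g ζ) (1, 0) : ℝ) - Complex.I * ((fderiv ℝ g ζ) (Complex.I, 0) : ℝ))

/-- The Wirtinger derivative `∂g/∂z₂`. -/
noncomputable def wirt2 (g : ℂ × ℂ → ℝ) (ζ : ℂ × ℂ) : ℂ :=
  (1 / 2 : ℂ) * (((fderiv ℝ g ζ) (0, 1) : ℝ) - Complex.I * ((fderiv ℝ g ζ) (0, Complex.I) : ℝ))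

/-- The support function `Φ(ζ,z) = Σ_{j=1}^{2} (∂g/∂ζ_j)(ζ)·(ζ_j − z_j)`. -/
noncomputable def suppFn (g : ℂ × ℂ → ℝ) (ζ z : ℂ × ℂ) : ℂ :=
  wirt1 g ζ * (ζ.1 - z.1) + wirt2 g ζ * (ζ.2 - z.2)

/-- The Euclidean norm on `ℂ²`. -/
noncomputable def eNorm (w : ℂ × ℂ) : ℝ :=
  Real.sqrt (‖w.1‖ ^ 2 + ‖w.2‖ ^ 2)

lemma aux_mono {a D : ℝ} {f f' : ℝ → ℝ}
    (h : ∀ t ∈ Set.Ico a D, HasDerivWithinAt f (f' t) (Set.Ico a D) t)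
    (h0 : ∀ t ∈ Set.Ioo a D, 0 ≤ f' t) : MonotoneOn f (Set.Ico a D) := by
  apply monotoneOn_of_hasDerivWithinAt_nonneg (f' := f') (convex_Ico a D)
  · exact fun t ht => (h t ht).continuousWithinAt
  · intro x hx
    exact (h x (interior_subset hx)).mono interior_subset
  · rw [interior_Ico]; exact h0

lemma aux_shift {a D : ℝ} (ha : 0 ≤ a) {f f' : ℝ → ℝ}
    (h : ∀ t ∈ Set.Ico 0 D, HasDerivWithinAt f (f' t) (Set.Ico 0 D) t) :
    ∀ t ∈ Set.Ico a D, HasDerivWithinAt (fun s => f (s - a)) (f' (t - a)) (Set.Ico a D) t := by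
  intro t ht
  have h1 := h (t - a) ⟨by linarith [ht.1], by linarith [ht.2]⟩
  have h2 : HasDerivWithinAt (fun s : ℝ => s - a) 1 (Set.Ico a D) t :=
    ((hasDerivAt_id t).sub_const a).hasDerivWithinAt
  have hm : Set.MapsTo (fun s : ℝ => s - a) (Set.Ico a D) (Set.Ico 0 D) :=
    fun s hs => ⟨sub_nonneg.2 hs.1, by linarith [hs.2, sub_le_self s ha]⟩
  have h3 := HasDerivWithinAt.comp t h1 h2 hm
  simpa [Function.comp_def] using h3

lemma aux_F {D : ℝ} {F F' F'' F''' : ℝ → ℝ}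
    (hF' : ∀ t ∈ Set.Ico 0 D, HasDerivWithinAt F (F' t) (Set.Ico 0 D) t)
    (hF'' : ∀ t ∈ Set.Ico 0 D, HasDerivWithinAt F' (F'' t) (Set.Ico 0 D) t)
    (hF''' : ∀ t ∈ Set.Ico 0 D, HasDerivWithinAt F'' (F''' t) (Set.Ico 0 D) t)
    (hF0 : F 0 = 0) (hF'0 : F' 0 = 0)
    (hF'pos : ∀ t ∈ Set.Ioo 0 D, 0 ≤ F' t)
    (hF''pos : ∀ t ∈ Set.Ioo 0 D, 0 ≤ F'' t)
    (hF'''pos : ∀ t ∈ Set.Ioo 0 D, 0 ≤ F''' t)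
    {a b s : ℝ} (ha : 0 ≤ a) (haD : a < D) (hb : 0 ≤ b) (hbD : b < D) (has : a ≤ s) :
    0 ≤ F (a / 2) ∧ 0 ≤ F (b / 2) ∧
    F (a / 2) ≤ F b - F a - F' a * (b - a - s) ∧
    F (b / 2) ≤ F b - F a - F' a * (b - a - s) := by
  have mF : MonotoneOn F (Set.Ico 0 D) := aux_mono hF' hF'pos
  have mF' : MonotoneOn F' (Set.Ico 0 D) := aux_mono hF'' hF''pos
  have mF'' : MonotoneOn F'' (Set.Ico 0 D) := aux_mono hF''' hF'''pos
  have hD : 0 < D := by linarith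
  have z0 : (0 : ℝ) ∈ Set.Ico 0 D := ⟨le_rfl, hD⟩
  have aD : a ∈ Set.Ico 0 D := ⟨ha, haD⟩
  have bD : b ∈ Set.Ico 0 D := ⟨hb, hbD⟩
  have a2 : a / 2 ∈ Set.Ico 0 D := ⟨by linarith, by linarith⟩
  have b2 : b / 2 ∈ Set.Ico 0 D := ⟨by linarith, by linarith⟩
  have pa : 0 ≤ F' a := by rw [← hF'0]; exact mF' z0 aD ha
  have p1 : 0 ≤ F (a / 2) := by rw [← hF0]; exact mF z0 a2 a2.1
  have p2 : 0 ≤ F (b / 2) := by rw [← hF0]; exact mF z0 b2 b2.1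
  have ka : F a ≤ a * F' a := by
    have := aux_mono (a := 0) (D := D) (f := fun t => t * F' t - F t)
      (f' := fun t => t * F'' t) (fun t ht => by
        have := ((hasDerivWithinAt_id t (Set.Ico 0 D)).mul (hF'' t ht)).sub (hF' t ht)
        have e : t * F'' t = 1 * F' t + id t * F'' t - F' t := by simp
        change HasDerivWithinAt _ (t * F'' t) _ _
        rw [e]
        exact this)
      (fun t ht => mul_nonneg ht.1.le (hF''pos t ht)) z0 aD ha
    simp only [hF0, zero_mul, sub_zero] at this
    linarith
  have sup1 : a ≤ b → F (b - a) ≤ F b - F a - F' a * (b - a) := by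
    intro hab
    have aa : a ∈ Set.Ico a D := ⟨le_rfl, haD⟩
    have sub : Set.Ico a D ⊆ Set.Ico 0 D := Set.Ico_subset_Ico_left ha
    have hg := aux_mono (a := a) (D := D) (f := fun t => F' t - F' (t - a))
      (f' := fun t => F'' t - F'' (t - a)) (fun t ht =>
        ((hF'' t (sub ht)).mono sub).sub (aux_shift ha hF'' t ht))
      (fun t ht => sub_nonneg.2 (mF'' ⟨by linarith [ht.1], by linarith [ht.2]⟩
        ⟨by linarith [ht.1], ht.2⟩ (by linarith)))
    have hh := aux_mono (a := a) (D := D) (f := fun t => F t - F (t - a) - t * F' a)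
      (f' := fun t => F' t - F' (t - a) - F' a) (fun t ht => by
        have := (((hF' t (sub ht)).mono sub).sub (aux_shift ha hF' t ht)).sub
          ((hasDerivWithinAt_id t (Set.Ico a D)).mul_const (F' a))
        rw [one_mul] at this
        exact this)
      (fun t ht => by
        have := hg aa ⟨ht.1.le, ht.2⟩ ht.1.le
        simp only [sub_self, hF'0, sub_zero] at this
        linarith)
    have := hh aa ⟨hab, hbD⟩ hab
    simp only [sub_self, hF0, sub_zero] at this
    linarith
  have sup2 : 0 ≤ F b - F a - F' a * (b - a) := by
    rcases le_total a b with hab | hab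
    · have h1 := sup1 hab
      have h2 : F 0 ≤ F (b - a) := mF z0 ⟨by linarith, by linarith⟩ (by linarith)
      linarith
    · rcases hab.eq_or_lt with rfl | hlt
      · simp
      have hc : ContinuousOn F (Set.Icc b a) := fun t ht =>
        ((hF' t ⟨by linarith [ht.1], by linarith [ht.2]⟩).continuousWithinAt).mono
          (fun x hx => ⟨by linarith [hx.1], by linarith [hx.2]⟩)
      obtain ⟨c, hc1, hc2⟩ := exists_hasDerivAt_eq_slope F F' hlt hc (fun x hx =>
        (hF' x ⟨by linarith [hx.1], by linarith [hx.2]⟩).hasDerivAt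
          (Ico_mem_nhds (by linarith [hx.1]) (by linarith [hx.2])))
      have h3 : F' c ≤ F' a := mF' ⟨by linarith [hc1.1], by linarith [hc1.2]⟩ aD hc1.2.le
      rw [hc2, div_le_iff₀ (by linarith)] at h3
      linarith
  have h4 : a * F' a ≤ s * F' a := mul_le_mul_of_nonneg_right has pa
  have h5 : F (a / 2) ≤ F a := mF a2 aD (by linarith)
  refine ⟨p1, p2, by linarith, ?_⟩
  rcases le_total b (2 * a) with h | h
  · have : F (b / 2) ≤ F a := mF b2 aD (by linarith)
    linarith
  · have h6 := sup1 (by linarith)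
    have : F (b / 2) ≤ F (b - a) := mF b2 ⟨by linarith, by linarith⟩ (by linarith)
    linarith [mul_nonneg ha pa]

lemma aux_convex {r : ℂ × ℂ → ℝ} (hconv : ConvexOn ℝ Set.univ r) (hdiff : Differentiable ℝ r)
    (ζ z : ℂ × ℂ) : fderiv ℝ r ζ (z - ζ) ≤ r z - r ζ := by
  have h1 := hconv.comp_affineMap (AffineMap.lineMap (k := ℝ) ζ z)
  have h2 : HasDerivAt (r ∘ (AffineMap.lineMap (k := ℝ) ζ z)) (fderiv ℝ r ζ (z - ζ)) 0 := by
    have h3 : HasDerivAt (AffineMap.lineMap (k := ℝ) ζ z) (z - ζ) (0 : ℝ) :=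
      AffineMap.hasDerivAt_lineMap
    refine HasFDerivAt.comp_hasDerivAt (0 : ℝ) ?_ h3
    simpa using (hdiff ζ).hasFDerivAt
  have h4 := h1.le_slope_of_hasDerivAt (x := 0) (y := 1) (by simp) (by simp) one_pos h2
  simpa [slope_def_field] using h4

lemma aux_re (g : ℂ × ℂ → ℝ) (ζ z : ℂ × ℂ) :
    2 * (suppFn g ζ z).re = fderiv ℝ g ζ (ζ - z) := by
  obtain ⟨w, hw⟩ : ∃ w, w = ζ - z := ⟨_, rfl⟩
  have e1 : ζ.1 - z.1 = w.1 := by rw [hw]; rfl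
  have e2 : ζ.2 - z.2 = w.2 := by rw [hw]; rfl
  have e : w = w.1.re • ((1, 0) : ℂ × ℂ) + w.1.im • ((Complex.I, 0) : ℂ × ℂ)
      + w.2.re • ((0, 1) : ℂ × ℂ) + w.2.im • ((0, Complex.I) : ℂ × ℂ) := by
    ext <;> simp
  have e3 : fderiv ℝ g ζ w = w.1.re * fderiv ℝ g ζ (1, 0) + w.1.im * fderiv ℝ g ζ (Complex.I, 0)
      + w.2.re * fderiv ℝ g ζ (0, 1) + w.2.im * fderiv ℝ g ζ (0, Complex.I) := by
    conv_lhs => rw [e]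
    simp only [map_add, map_smul, smul_eq_mul]
  rw [← hw, e3, suppFn, wirt1, wirt2, e1, e2]
  simp
  ring

lemma aux_fderiv {D : ℝ} {F F' : ℝ → ℝ}
    (hF' : ∀ t ∈ Set.Ico 0 D, HasDerivWithinAt F (F' t) (Set.Ico 0 D) t)
    {r : ℂ × ℂ → ℝ} (hdiff : Differentiable ℝ r) {ρ : ℂ × ℂ → ℝ}
    (hρ : ∀ z : ℂ × ℂ, ‖z.1‖ ^ 2 < D → ρ z = F (‖z.1‖ ^ 2) + r z)
    (ζ w : ℂ × ℂ) (hζ : ‖ζ.1‖ ^ 2 < D) :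
    fderiv ℝ ρ ζ w = F' (‖ζ.1‖ ^ 2) * (2 * inner ℝ ζ.1 w.1) + fderiv ℝ r ζ w := by
  have ho : IsOpen {z : ℂ × ℂ | ‖z.1‖ ^ 2 < D} :=
    isOpen_lt (by fun_prop) continuous_const
  have h1 : HasFDerivAt (fun z : ℂ × ℂ => ‖z.1‖ ^ 2) _ ζ :=
    (hasFDerivAt_fst (𝕜 := ℝ) (p := ζ)).norm_sq
  have hm : Set.MapsTo (fun z : ℂ × ℂ => ‖z.1‖ ^ 2) {z : ℂ × ℂ | ‖z.1‖ ^ 2 < D}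
      (Set.Ico 0 D) := fun z hz => ⟨sq_nonneg _, hz⟩
  have h2 := (HasDerivWithinAt.comp_hasFDerivWithinAt ζ (hF' (‖ζ.1‖ ^ 2) ⟨by positivity, hζ⟩)
    (h1.hasFDerivWithinAt (s := {z : ℂ × ℂ | ‖z.1‖ ^ 2 < D}))
    hm).hasFDerivAt (ho.mem_nhds hζ)
  have h3 := h2.add (hdiff ζ).hasFDerivAt
  have h4 := h3.congr_of_eventuallyEq (f₁ := ρ) (by
    filter_upwards [ho.mem_nhds hζ] with z hz
    simpa using hρ z hz)
  rw [h4.fderiv]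
  simp
  left
  ring

lemma aux_pow {P E A B x y : ℝ} (k : ℕ) (hA : 0 ≤ A) (hB : 0 ≤ B)
    (hAP : A ≤ 3 * P) (hBP : B ≤ 3 * P) (hx : 0 ≤ x) (hy : 0 ≤ y) (hxE : x ≤ E)
    (hyE : y ≤ 2 * E) :
    P ^ k * E ≥ 1 / (3 * 3 ^ k) * (A ^ k * x + B ^ k * y) := by
  have hP : 0 ≤ P := by linarith
  have h1 : A ^ k * x ≤ (3 * P) ^ k * E := by gcongr
  have h2 : B ^ k * y ≤ (3 * P) ^ k * (2 * E) := by gcongr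
  rw [mul_pow] at h1 h2
  rw [ge_iff_le, one_div, inv_mul_le_iff₀ (by positivity)]
  linarith

/-- Lemma 2.2, second case: lower bound for the support function of
`ρ(z) = F(|z₁|²) + r(z)` when `|ζ₁| ≤ |z₁ − ζ₁|`. -/
theorem stmt6 (D : ℝ) (hD : 0 < D) (F F' F'' F''' : ℝ → ℝ)
    (hF : ContDiffOn ℝ 3 F (Set.Ico 0 D))
    (hF' : ∀ t ∈ Set.Ico 0 D, HasDerivWithinAt F (F' t) (Set.Ico 0 D) t)
    (hF'' : ∀ t ∈ Set.Ico 0 D, HasDerivWithinAt F' (F'' t) (Set.Ico 0 D) t)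
    (hF''' : ∀ t ∈ Set.Ico 0 D, HasDerivWithinAt F'' (F''' t) (Set.Ico 0 D) t)
    (hF0 : F 0 = 0) (hF'0 : F' 0 = 0)
    (hF'pos : ∀ t ∈ Set.Ioo 0 D, 0 ≤ F' t)
    (hF''pos : ∀ t ∈ Set.Ioo 0 D, 0 ≤ F'' t)
    (hF'''pos : ∀ t ∈ Set.Ioo 0 D, 0 ≤ F''' t)
    (hquot : ∀ t ∈ Set.Ioo 0 D, 0 ≤ deriv (fun s => F s / s) t)
    (r : ℂ × ℂ → ℝ) (hconv : ConvexOn ℝ Set.univ r) (hdiff : Differentiable ℝ r)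
    (ρ : ℂ × ℂ → ℝ)
    (hρ : ∀ z : ℂ × ℂ, ‖z.1‖ ^ 2 < D → ρ z = F (‖z.1‖ ^ 2) + r z)
    (d : ℝ) (hd : d ^ 2 < D) (k : ℕ) (hk : k = 1 ∨ k = 2) :
    ∃ c > (0 : ℝ), ∀ ζ z : ℂ × ℂ,
      ‖ζ.1‖ ≤ d → ‖z.1‖ ≤ d → 0 ≤ ρ ζ - ρ z →
      ‖ζ.1‖ ≤ ‖z.1 - ζ.1‖ →
      ‖suppFn ρ ζ z‖ ^ k * eNorm (z - ζ) ≥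
        c * ((|(suppFn ρ ζ z).im| + ρ ζ - ρ z + F (‖ζ.1‖ ^ 2 / 2)) ^ k *
              ‖ζ.1‖ +
            (|(suppFn ρ ζ z).im| + ρ ζ - ρ z + F (‖z.1‖ ^ 2 / 2)) ^ k *
              ‖z.1‖) := by
  refine ⟨1 / (3 * 3 ^ k), by positivity, ?_⟩
  intro ζ z hζ hz hpos hle
  have hd0 : 0 ≤ d := (norm_nonneg _).trans hζ
  have hζD : ‖ζ.1‖ ^ 2 < D := lt_of_le_of_lt (by gcongr) hd
  have hzD : ‖z.1‖ ^ 2 < D := lt_of_le_of_lt (by gcongr) hd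
  have hs : ‖ζ.1‖ ^ 2 ≤ ‖z.1 - ζ.1‖ ^ 2 := by gcongr
  obtain ⟨p1, p2, q1, q2⟩ := aux_F hF' hF'' hF''' hF0 hF'0 hF'pos hF''pos hF'''pos
    (sq_nonneg ‖ζ.1‖) hζD (sq_nonneg ‖z.1‖) hzD hs
  have hre := aux_re ρ ζ z
  rw [aux_fderiv hF' hdiff hρ ζ _ hζD] at hre
  have hc := aux_convex hconv hdiff ζ z
  have hneg : fderiv ℝ r ζ (ζ - z) = - fderiv ℝ r ζ (z - ζ) := by
    rw [← map_neg, neg_sub]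
  have hin : 2 * inner ℝ ζ.1 (ζ - z).1 =
      -(‖z.1‖ ^ 2 - ‖ζ.1‖ ^ 2 - ‖z.1 - ζ.1‖ ^ 2) := by
    rw [norm_sub_sq_real, Prod.fst_sub, inner_sub_right, real_inner_self_eq_norm_sq,
      real_inner_comm]
    ring
  rw [hin, hneg] at hre
  have e1 := hρ ζ hζD
  have e2 := hρ z hzD
  have hR : (suppFn ρ ζ z).re ≤ ‖suppFn ρ ζ z‖ := Complex.re_le_norm _
  have hI : |(suppFn ρ ζ z).im| ≤ ‖suppFn ρ ζ z‖ := Complex.abs_im_le_norm _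
  have hI0 := abs_nonneg (suppFn ρ ζ z).im
  have hE : ‖z.1 - ζ.1‖ ≤ eNorm (z - ζ) := by
    apply Real.le_sqrt_of_sq_le
    simp
  have ht : ‖z.1‖ ≤ ‖ζ.1‖ + ‖z.1 - ζ.1‖ := norm_le_insert' _ _
  apply aux_pow k
  · linarith
  · linarith
  · linarith
  · linarith
  · positivity
  · positivity
  · linarith
  · linarith
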